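/- Let G₁, G₂ ∈ ℂ^{m×n} with rank(G₁) = rank(G₂) = min{m,n}. Then ‖G₂⁺ − G₁⁺‖ ≤ √2 · ‖G₂⁺‖ · ‖G₁⁺‖ · ‖G₂ − G₁‖ in the spectral norm. -/

import Mathlib

open Matrix

/-- `P` is the Moore–Penrose pseudoinverse of `A` (the four Penrose conditions). -/
def IsMoorePenrose {m n : ℕ} (A : Matrix (Fin m) (Fin n) ℂ) (P : Matrix (Fin n) (Fin m) ℂ) :
    Prop :=
  A * P * A = A ∧ P * A * P = P ∧ (A * P)ᴴ = A * P ∧ (P * A)ᴴ = P * A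

/-- The spectral norm (ℓ²-operator norm) of a complex matrix. -/
noncomputable def specNorm {m n : ℕ} (A : Matrix (Fin m) (Fin n) ℂ) : ℝ :=
  ‖LinearMap.toContinuousLinearMap (Matrix.toEuclideanLin A)‖

open scoped Matrix.Norms.L2Operator in
theorem specNorm_eq_l2 {m n : ℕ} (A : Matrix (Fin m) (Fin n) ℂ) : specNorm A = ‖A‖ := by
  rw [Matrix.l2_opNorm_def]; rfl

theorem left_inv_of_rank {m n : ℕ} (G : Matrix (Fin m) (Fin n) ℂ) (P : Matrix (Fin n) (Fin m) ℂ)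
    (h : G.rank = n) (hG : G * P * G = G) : P * G = 1 := by
  have hli : Function.Injective G.mulVecLin := by
    rw [← LinearMap.ker_eq_bot]
    have h1 := G.mulVecLin.finrank_range_add_finrank_ker
    have h2 : Module.finrank ℂ (LinearMap.range G.mulVecLin) = n := h
    rw [h2] at h1
    simp at h1
    exact h1
  apply Matrix.ext_of_mulVec_single
  intro i
  apply hli
  simp only [Matrix.mulVecLin_apply, Matrix.mulVec_mulVec, ← Matrix.mul_assoc, hG, Matrix.mul_one]

open scoped ComplexOrder in
theorem rank_conjT_complex {m n : ℕ} (A : Matrix (Fin m) (Fin n) ℂ) : Aᴴ.rank = A.rank :=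
  Matrix.rank_conjTranspose A

theorem IsMoorePenrose.conjT {m n : ℕ} {A : Matrix (Fin m) (Fin n) ℂ}
    {P : Matrix (Fin n) (Fin m) ℂ} (h : IsMoorePenrose A P) : IsMoorePenrose Aᴴ Pᴴ := by
  obtain ⟨a, b, c, d⟩ := h
  refine ⟨?_, ?_, ?_, ?_⟩
  · rw [← Matrix.conjTranspose_mul, ← Matrix.conjTranspose_mul, ← Matrix.mul_assoc, a]
  · rw [← Matrix.conjTranspose_mul, ← Matrix.conjTranspose_mul, ← Matrix.mul_assoc, b]
  · rw [← Matrix.conjTranspose_mul, d, d]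
  · rw [← Matrix.conjTranspose_mul, c, c]

section
open scoped Matrix.Norms.L2Operator

theorem wedin_aux {m n : ℕ} (G₁ G₂ : Matrix (Fin m) (Fin n) ℂ)
    (P₁ P₂ : Matrix (Fin n) (Fin m) ℂ)
    (hP₁ : IsMoorePenrose G₁ P₁) (hP₂ : IsMoorePenrose G₂ P₂)
    (i₂ : P₂ * G₂ = 1) (hle : ‖P₂‖ ≤ ‖P₁‖) :
    ‖P₂ - P₁‖ ≤ Real.sqrt 2 * ‖P₂‖ * ‖P₁‖ * ‖G₂ - G₁‖ := by
  obtain ⟨a1, b1, c1, d1⟩ := hP₁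
  obtain ⟨a2, b2, c2, d2⟩ := hP₂
  set E := G₂ - G₁ with hE
  set R : Matrix (Fin m) (Fin m) ℂ := 1 - G₁ * P₁ with hR
  have hRH : Rᴴ = R := by simp only [hR, Matrix.conjTranspose_sub, Matrix.conjTranspose_one, c1]
  have hPR : P₁ * R = 0 := by
    rw [hR, Matrix.mul_sub, Matrix.mul_one, ← Matrix.mul_assoc, b1, sub_self]
  have hRG : R * G₁ = 0 := by
    rw [hR, Matrix.sub_mul, Matrix.one_mul, a1, sub_self]
  have hGR : G₁ᴴ * R = 0 := by
    rw [← hRH, ← Matrix.conjTranspose_mul, hRG, Matrix.conjTranspose_zero]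
  have hRR : R * R = R := by
    nth_rewrite 2 [hR]
    rw [Matrix.mul_sub, ← Matrix.mul_assoc, hRG, Matrix.zero_mul, Matrix.mul_one, sub_zero]
  have hRn : ‖R‖ ≤ 1 := by
    have := Matrix.l2_opNorm_conjTranspose_mul_self R
    rw [hRH, hRR] at this
    nlinarith [norm_nonneg R]
  set A := P₂ * E * P₁ with hA
  set B := P₂ * R with hB
  have hB' : B = P₂ * (P₂ᴴ * (Eᴴ * R)) := by
    have e1 : Eᴴ * R = G₂ᴴ * R := by
      rw [hE, Matrix.conjTranspose_sub, Matrix.sub_mul, hGR, sub_zero]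
    rw [e1, ← Matrix.mul_assoc P₂ᴴ, ← Matrix.conjTranspose_mul, c2, ← Matrix.mul_assoc,
      ← Matrix.mul_assoc, b2]
  have hM : P₂ - P₁ = B - A := by
    rw [hA, hB, hE, hR, Matrix.mul_sub, Matrix.mul_sub, Matrix.sub_mul, i₂, Matrix.one_mul,
      Matrix.mul_one, Matrix.mul_assoc]
    abel
  have hAB : A * Bᴴ = 0 := by
    rw [hA, hB, Matrix.conjTranspose_mul, hRH, Matrix.mul_assoc, ← Matrix.mul_assoc P₁, hPR,
      Matrix.zero_mul, Matrix.mul_zero]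
  have hBA : B * Aᴴ = 0 := by
    have := congrArg Matrix.conjTranspose hAB
    simpa [Matrix.conjTranspose_mul] using this
  have hMM : (B - A) * (B - A)ᴴ = B * Bᴴ + A * Aᴴ := by
    rw [Matrix.conjTranspose_sub, Matrix.sub_mul, Matrix.mul_sub, Matrix.mul_sub, hAB, hBA]
    abel
  have key (X : Matrix (Fin n) (Fin m) ℂ) : ‖X * Xᴴ‖ = ‖X‖ * ‖X‖ := by
    have := Matrix.l2_opNorm_conjTranspose_mul_self Xᴴ
    rwa [Matrix.conjTranspose_conjTranspose, Matrix.l2_opNorm_conjTranspose] at this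
  set c := ‖P₂‖ * ‖P₁‖ * ‖E‖ with hc
  have hc0 : 0 ≤ c := by positivity
  have hAn : ‖A‖ ≤ c := by
    calc ‖A‖ ≤ ‖P₂ * E‖ * ‖P₁‖ := Matrix.l2_opNorm_mul _ _
      _ ≤ (‖P₂‖ * ‖E‖) * ‖P₁‖ := by gcongr; exact Matrix.l2_opNorm_mul _ _
      _ = c := by rw [hc]; ring
  have hBn : ‖B‖ ≤ c := by
    rw [hB']
    calc ‖P₂ * (P₂ᴴ * (Eᴴ * R))‖ ≤ ‖P₂‖ * ‖P₂ᴴ * (Eᴴ * R)‖ := Matrix.l2_opNorm_mul _ _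
      _ ≤ ‖P₂‖ * (‖P₂ᴴ‖ * ‖Eᴴ * R‖) := by gcongr; exact Matrix.l2_opNorm_mul _ _
      _ ≤ ‖P₂‖ * (‖P₂ᴴ‖ * (‖Eᴴ‖ * ‖R‖)) := by gcongr; exact Matrix.l2_opNorm_mul _ _
      _ ≤ ‖P₂‖ * (‖P₁‖ * (‖E‖ * 1)) := by
        rw [Matrix.l2_opNorm_conjTranspose, Matrix.l2_opNorm_conjTranspose]; gcongr
      _ = c := by rw [hc]; ring
  have hfin : ‖B - A‖ ^ 2 ≤ 2 * c ^ 2 := by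
    have h1 := key (B - A)
    rw [hMM] at h1
    have h2 := norm_add_le (B * Bᴴ) (A * Aᴴ)
    rw [key, key] at h2
    nlinarith [norm_nonneg A, norm_nonneg B]
  rw [hM]
  calc ‖B - A‖ ≤ Real.sqrt (2 * c ^ 2) := Real.le_sqrt_of_sq_le hfin
    _ = Real.sqrt 2 * ‖P₂‖ * ‖P₁‖ * ‖E‖ := by
      rw [Real.sqrt_mul (by norm_num), Real.sqrt_sq hc0, hc]; ring

theorem wedin_tall {m n : ℕ} (G₁ G₂ : Matrix (Fin m) (Fin n) ℂ)
    (h₁ : G₁.rank = n) (h₂ : G₂.rank = n)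
    (P₁ P₂ : Matrix (Fin n) (Fin m) ℂ)
    (hP₁ : IsMoorePenrose G₁ P₁) (hP₂ : IsMoorePenrose G₂ P₂) :
    ‖P₂ - P₁‖ ≤ Real.sqrt 2 * ‖P₂‖ * ‖P₁‖ * ‖G₂ - G₁‖ := by
  rcases le_total ‖P₂‖ ‖P₁‖ with h | h
  · exact wedin_aux G₁ G₂ P₁ P₂ hP₁ hP₂ (left_inv_of_rank _ _ h₂ hP₂.1) h
  · have := wedin_aux G₂ G₁ P₂ P₁ hP₂ hP₁ (left_inv_of_rank _ _ h₁ hP₁.1) h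
    rw [norm_sub_rev P₂, norm_sub_rev G₂]
    linarith [mul_right_comm (Real.sqrt 2) ‖P₂‖ ‖P₁‖, congrArg (· * ‖G₁ - G₂‖) (mul_right_comm (Real.sqrt 2) ‖P₂‖ ‖P₁‖)]
end

/-- Wedin, full-rank case.  Let `G₁, G₂ ∈ ℂ^{m×n}` with
`rank G₁ = rank G₂ = min{m,n}`.  Then
`‖G₂⁺ − G₁⁺‖ ≤ √2 · ‖G₂⁺‖ · ‖G₁⁺‖ · ‖G₂ − G₁‖` in the spectral norm. -/
theorem pinv_perturbation_full_rank
    {m n : ℕ} (G₁ G₂ : Matrix (Fin m) (Fin n) ℂ)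
    (h₁ : G₁.rank = min m n) (h₂ : G₂.rank = min m n)
    (P₁ P₂ : Matrix (Fin n) (Fin m) ℂ)
    (hP₁ : IsMoorePenrose G₁ P₁) (hP₂ : IsMoorePenrose G₂ P₂) :
    specNorm (P₂ - P₁) ≤
      Real.sqrt 2 * specNorm P₂ * specNorm P₁ * specNorm (G₂ - G₁) := by
  simp only [specNorm_eq_l2]
  rcases le_total n m with h | h
  · rw [min_eq_right h] at h₁ h₂
    exact wedin_tall G₁ G₂ h₁ h₂ P₁ P₂ hP₁ hP₂
  · rw [min_eq_left h] at h₁ h₂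
    have := wedin_tall G₁ᴴ G₂ᴴ (by rw [rank_conjT_complex, h₁])
      (by rw [rank_conjT_complex, h₂]) P₁ᴴ P₂ᴴ hP₁.conjT hP₂.conjT
    simpa only [← Matrix.conjTranspose_sub, Matrix.l2_opNorm_conjTranspose] using this
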